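/- arXiv:1207.1900 — 3 statements merged into one kernel-verified Lean document; each statement's English description precedes it below -/
import Mathlib

section
/- (Equational Noetherianity of free groups) Let F be a free group of finite rank with basis A, and let n be a natural number. For every set S of elements of the free group on {x₁,…,xₙ} ∪ A (a system of equations with constants in the variables x₁,…,xₙ), there exists a finite subset S₀ of S which is equivalent to S over F: for every tuple (a₁,…,aₙ) of elements of F, w(a₁,…,aₙ) = 1 in F for all w ∈ S₀ if and only if w(a₁,…,aₙ) = 1 in F for all w ∈ S. -/
/-- The evaluation homomorphism `F({x₁, …, xₙ} ∪ A) →* F(A)` sending each variable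
`xⱼ ↦ aⱼ` and each constant `a ∈ A` to the corresponding basis element of the free
group `F = F(A)`. -/
def evalEquation {n r : ℕ} (a : Fin n → FreeGroup (Fin r)) :
    FreeGroup (Fin n ⊕ Fin r) →* FreeGroup (Fin r) :=
  FreeGroup.lift (Sum.elim a FreeGroup.of)

namespace EqNoeth

open scoped Pointwise

/-- Nonzero integer vectors of length two. -/
abbrev NZ : Type := {v : Fin 2 → ℤ // v ≠ 0}

/-- The action of the special linear group on nonzero vectors. -/
instance actNZ : MulAction (Matrix.SpecialLinearGroup (Fin 2) ℤ) NZ where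
  smul g v := ⟨g • v.1, fun h => v.2 (by
    have h2 : g⁻¹ • (g • v.1) = 0 := by rw [h, smul_zero]
    rwa [inv_smul_smul] at h2)⟩
  one_smul v := Subtype.ext (one_smul _ v.1)
  mul_smul g h v := Subtype.ext (mul_smul g h v.1)

theorem actNZ_val (g : Matrix.SpecialLinearGroup (Fin 2) ℤ) (v : NZ) :
    (g • v).1 = g.1.mulVec v.1 := rfl

/-- The Schottky generators. -/
def gen (i : ℕ) : Matrix.SpecialLinearGroup (Fin 2) ℤ :=
  ⟨!![(6 * i + 3 : ℤ), -((6 * i + 3) * (6 * i)) - 1; 1, -(6 * i)], by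
    rw [Matrix.det_fin_two_of]; ring⟩

theorem gen_val (i : ℕ) : (gen i).1 =
    !![(6 * i + 3 : ℤ), -((6 * i + 3) * (6 * i)) - 1; 1, -(6 * i)] := rfl

theorem gen_inv_val (i : ℕ) : ((gen i)⁻¹).1 =
    !![-(6 * i : ℤ), -(-((6 * i + 3) * (6 * i)) - 1); -1, (6 * i + 3 : ℤ)] := by
  have h : ((gen i)⁻¹).1 = (gen i).1.adjugate := Matrix.SpecialLinearGroup.coe_inv _
  rw [h, gen_val, Matrix.adjugate_fin_two_of]

theorem key (p q d e : ℤ) (h1 : |p - d * q| ≤ |q|) (h2 : |p - e * q| ≤ |q|)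
    (h3 : 3 ≤ |d - e|) : p = 0 ∧ q = 0 := by
  have h4 : |d - e| * |q| ≤ |q| + |q| := by
    rw [← abs_mul]
    calc |(d - e) * q| = |(p - e * q) - (p - d * q)| := by ring_nf
      _ ≤ |p - e * q| + |p - d * q| := abs_sub _ _
      _ ≤ _ := by linarith
  have h5 : |q| = 0 := by nlinarith [abs_nonneg q]
  have h6 : q = 0 := abs_eq_zero.mp h5
  subst h6
  simpa using h1

theorem nz_false (v : NZ) (h : v.1 0 = 0 ∧ v.1 1 = 0) : False := by
  apply v.2
  ext i
  fin_cases i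
  · exact h.1
  · exact h.2

theorem gap (i j : ℕ) (h : i ≠ j) (t : ℤ) : 3 ≤ |((6 * i + t : ℤ)) - (6 * j + t)| := by
  rw [le_abs]
  omega

theorem gen_inj : Function.Injective (FreeGroup.lift gen) := by
  refine FreeGroup.injective_lift_of_ping_pong gen
    (α := NZ)
    (fun i => {v | |v.1 0 - (6 * i + 3) * v.1 1| ≤ |v.1 1|})
    (fun i => {v | |v.1 0 - (6 * i + 0) * v.1 1| < |v.1 1|}) ?_ ?_ ?_ ?_ ?_ ?_
  · intro i
    refine ⟨⟨![6 * i + 3, 1], fun h => ?_⟩, ?_⟩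
    · have := congrFun h 1
      simp at this
    · simp
  · intro i j hij
    refine Set.disjoint_left.2 fun v h1 h2 => ?_
    exact nz_false v (key _ _ _ _ h1 h2 (gap i j hij 3))
  · intro i j hij
    refine Set.disjoint_left.2 fun v h1 h2 => ?_
    exact nz_false v (key _ _ _ _ (le_of_lt h1) (le_of_lt h2) (gap i j hij 0))
  · intro i j
    refine Set.disjoint_left.2 fun v h1 h2 => ?_
    refine nz_false v (key _ _ _ _ h1 (le_of_lt h2) ?_)
    rw [le_abs]
    omega
  · rintro i _ ⟨v, hv, rfl⟩
    simp only [Set.mem_compl_iff, Set.mem_ofPred_eq, not_lt] at hv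
    change |(gen i • v).1 0 - (6 * i + 3) * (gen i • v).1 1| ≤ |(gen i • v).1 1|
    rw [actNZ_val, gen_val]
    simp only [Matrix.mulVec, dotProduct, Fin.sum_univ_two, Matrix.of_apply,
      Matrix.cons_val_zero, Matrix.cons_val_one]
    have e1 : (6 * (i:ℤ) + 3) * v.1 0 + (-((6 * (i:ℤ) + 3) * (6 * i)) - 1) * v.1 1 -
        (6 * i + 3) * (1 * v.1 0 + -(6 * (i:ℤ)) * v.1 1) = - v.1 1 := by ring
    have e2 : 1 * v.1 0 + -(6 * (i:ℤ)) * v.1 1 = v.1 0 - (6 * i + 0) * v.1 1 := by ring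
    rw [e1, e2, abs_neg]
    exact hv
  · rintro i _ ⟨v, hv, rfl⟩
    simp only [Set.mem_compl_iff, Set.mem_ofPred_eq, not_le] at hv
    change |((gen i)⁻¹ • v).1 0 - (6 * i + 0) * ((gen i)⁻¹ • v).1 1| < |((gen i)⁻¹ • v).1 1|
    rw [actNZ_val, gen_inv_val]
    simp only [Matrix.mulVec, dotProduct, Fin.sum_univ_two, Matrix.of_apply,
      Matrix.cons_val_zero, Matrix.cons_val_one]
    have e1 : -(6 * (i:ℤ)) * v.1 0 + -(-((6 * (i:ℤ) + 3) * (6 * i)) - 1) * v.1 1 -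
        (6 * i + 0) * (-1 * v.1 0 + (6 * (i:ℤ) + 3) * v.1 1) = v.1 1 := by ring
    have e2 : -1 * v.1 0 + (6 * (i:ℤ) + 3) * v.1 1 = -(v.1 0 - (6 * i + 3) * v.1 1) := by ring
    rw [e1, e2, abs_neg]
    exact hv

theorem exists_faithful (r : ℕ) :
    ∃ ρ : FreeGroup (Fin r) →* Matrix.SpecialLinearGroup (Fin 2) ℤ, Function.Injective ρ :=
  ⟨(FreeGroup.lift gen).comp (FreeGroup.map Fin.val),
    gen_inj.comp (FreeGroup.map_injective Fin.val_injective)⟩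

end EqNoeth

/-- Equational Noetherianity of free groups: every system `S` of equations with
constants in finitely many variables over a free group of finite rank is equivalent
over the free group to a finite subsystem `S₀ ⊆ S`. -/
theorem free_group_equationally_noetherian (r n : ℕ)
    (S : Set (FreeGroup (Fin n ⊕ Fin r))) :
    ∃ S₀ ⊆ S, S₀.Finite ∧
      ∀ a : Fin n → FreeGroup (Fin r),
        ((∀ w ∈ S₀, evalEquation a w = 1) ↔ (∀ w ∈ S, evalEquation a w = 1)) := by
  classical
  obtain ⟨ρ, hρ⟩ := EqNoeth.exists_faithful r
  -- coordinate functions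
  let f : FreeGroup (Fin n ⊕ Fin r) → Fin 2 → Fin 2 → ((Fin n → FreeGroup (Fin r)) → ℤ) :=
    fun w i j a => (ρ (evalEquation a w)).1 i j
  let G : Set ((Fin n → FreeGroup (Fin r)) → ℤ) :=
    Set.range fun t : (Fin n ⊕ Fin r) × Fin 2 × Fin 2 => f (FreeGroup.of t.1) t.2.1 t.2.2
  have hG : G.Finite := Set.finite_range _
  let A := Algebra.adjoin ℤ G
  have hA : IsNoetherianRing A := by
    have : A.FG := Subalgebra.fg_def.2 ⟨G, hG, rfl⟩
    have : Algebra.FiniteType ℤ A := A.fg_iff_finiteType.1 this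
    exact Algebra.FiniteType.isNoetherianRing ℤ A
  have hinv : ∀ w, (∀ i j, f w i j ∈ A) → ∀ i j, f w⁻¹ i j ∈ A := by
    intro w hw i j
    have h00 : f w⁻¹ 0 0 = f w 1 1 := by
      funext a; simp [f, Matrix.SpecialLinearGroup.SL2_inv_expl]
    have h01 : f w⁻¹ 0 1 = - f w 0 1 := by
      funext a; simp [f, Matrix.SpecialLinearGroup.SL2_inv_expl]
    have h10 : f w⁻¹ 1 0 = - f w 1 0 := by
      funext a; simp [f, Matrix.SpecialLinearGroup.SL2_inv_expl]
    have h11 : f w⁻¹ 1 1 = f w 0 0 := by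
      funext a; simp [f, Matrix.SpecialLinearGroup.SL2_inv_expl]
    fin_cases i <;> fin_cases j
    · exact h00 ▸ hw 1 1
    · exact h01 ▸ neg_mem (hw 0 1)
    · exact h10 ▸ neg_mem (hw 1 0)
    · exact h11 ▸ hw 0 0
  have hf : ∀ w i j, f w i j ∈ A := by
    intro w
    induction w using FreeGroup.induction_on with
    | C1 =>
      intro i j
      have : f 1 i j = ((if i = j then 1 else 0 : ℤ) : (Fin n → FreeGroup (Fin r)) → ℤ) := by
        funext a; simp [f, Matrix.one_apply]
      rw [this]
      exact intCast_mem A _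
    | of x => intro i j; exact Algebra.subset_adjoin ⟨(x, i, j), rfl⟩
    | inv_of x ih => exact hinv _ ih
    | mul x y hx hy =>
      intro i j
      have : f (x * y) i j = f x i 0 * f y 0 j + f x i 1 * f y 1 j := by
        funext a; simp [f, Matrix.mul_apply, Fin.sum_univ_two]
      rw [this]
      exact add_mem (mul_mem (hx _ _) (hy _ _)) (mul_mem (hx _ _) (hy _ _))
  let g : FreeGroup (Fin n ⊕ Fin r) × Fin 2 × Fin 2 → A := fun t =>
    ⟨f t.1 t.2.1 t.2.2, hf _ _ _⟩ - ((if t.2.1 = t.2.2 then 1 else 0 : ℤ) : A)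
  let ev : (Fin n → FreeGroup (Fin r)) → (A →+* ℤ) := fun a =>
    (Pi.evalRingHom (fun _ : Fin n → FreeGroup (Fin r) => ℤ) a).comp A.val.toRingHom
  have hev : ∀ a w, evalEquation a w = 1 ↔ ∀ i j, ev a (g (w, i, j)) = 0 := by
    intro a w
    rw [← map_eq_one_iff ρ hρ, Matrix.SpecialLinearGroup.ext_iff]
    have : ∀ i j, ev a (g (w, i, j)) =
        (ρ (evalEquation a w)).1 i j - (if i = j then 1 else 0 : ℤ) := by
      intro i j
      simp only [g, map_sub, map_intCast, Int.cast_id]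
      rfl
    simp only [this, sub_eq_zero, Matrix.SpecialLinearGroup.coe_one, Matrix.one_apply]
  have hfg : (Submodule.span A (g '' (S ×ˢ Set.univ))).FG := IsNoetherian.noetherian _
  rw [Submodule.fg_span_iff_fg_span_finset_subset] at hfg
  obtain ⟨T, hT, hspan⟩ := hfg
  obtain ⟨U, hU, hUT⟩ := Finset.subset_set_image_iff.1 hT
  refine ⟨Prod.fst '' (U : Set (FreeGroup (Fin n ⊕ Fin r) × Fin 2 × Fin 2)), ?_, U.finite_toSet.image _, ?_⟩
  · rintro _ ⟨t, ht, rfl⟩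
    exact (hU ht).1
  · intro a
    constructor
    · intro h w hw
      rw [hev]
      intro i j
      have h1 : g (w, i, j) ∈ Submodule.span A (T : Set A) := by
        rw [← hspan]
        exact Submodule.subset_span ⟨_, ⟨hw, trivial⟩, rfl⟩
      have h2 : Submodule.span A (T : Set A) ≤ RingHom.ker (ev a) := by
        rw [Submodule.span_le]
        intro x hx
        rw [← hUT] at hx
        obtain ⟨⟨w', i', j'⟩, ht, rfl⟩ := Finset.mem_image.1 hx
        exact (hev a w').1 (h w' ⟨_, ht, rfl⟩) i' j'
      exact h2 h1
    · rintro h _ ⟨t, ht, rfl⟩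
      exact h _ (hU ht).1
end

section
/- Let F be a free group of finite rank at least 2 with basis A. Every finite system of equations with constants in variables x₁,…,xₙ over F is equivalent over F to a single equation with constants: for any w₁,…,wₛ in the free group on {x₁,…,xₙ} ∪ A there exists a single element w of the free group on {x₁,…,xₙ} ∪ A such that for every tuple (a₁,…,aₙ) of elements of F, one has w(a₁,…,aₙ) = 1 in F if and only if wᵢ(a₁,…,aₙ) = 1 in F for all i = 1,…,s. -/
open scoped commutatorElement

open Polynomial Matrix in
/-- `g = 1 + X ^ k * V` with `V(0) = U`. -/
def LeadTerm (g : SpecialLinearGroup (Fin 2) ℤ[X]) (k : ℕ) (U : Matrix (Fin 2) (Fin 2) ℤ) : Prop :=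
  ∃ V : Matrix (Fin 2) (Fin 2) ℤ[X], g.1 = 1 + (X : ℤ[X]) ^ k • V ∧
    (evalRingHom (0 : ℤ)).mapMatrix V = U

open Polynomial Matrix in
lemma LeadTerm.ev {g : SpecialLinearGroup (Fin 2) ℤ[X]} {k : ℕ} {U} (h : LeadTerm g k U)
    (hk : 1 ≤ k) : (evalRingHom (0 : ℤ)).mapMatrix g.1 = 1 := by
  obtain ⟨V, h, -⟩ := h
  rw [h]
  ext i j
  simp [Matrix.map_apply, Matrix.one_apply]
  have : k ≠ 0 := by omega
  split_ifs <;> simp [this]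

open Polynomial Matrix in
lemma LeadTerm.mul {g h : SpecialLinearGroup (Fin 2) ℤ[X]} {k : ℕ} {U V}
    (hg : LeadTerm g k U) (hh : LeadTerm h k V) (hk : 1 ≤ k) : LeadTerm (g * h) k (U + V) := by
  have e := hh.ev hk
  obtain ⟨U', h1, rfl⟩ := hg
  obtain ⟨V', h2, rfl⟩ := hh
  refine ⟨U' * h.1 + V', ?_, ?_⟩
  · change g.1 * h.1 = _
    rw [h1, add_mul, one_mul, smul_add, smul_mul_assoc]
    conv_lhs => rw [h2]
    rw [h2]
    abel
  · rw [map_add, map_mul, e, mul_one]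

open Polynomial Matrix in
lemma LeadTerm.inv_ev {g : SpecialLinearGroup (Fin 2) ℤ[X]} 
    (h : (evalRingHom (0 : ℤ)).mapMatrix g.1 = 1) :
     (evalRingHom (0 : ℤ)).mapMatrix (g⁻¹).1 = 1 := by
  have : (g⁻¹).1 * g.1 = 1 := congrArg Subtype.val (inv_mul_cancel g)
  have := congrArg (evalRingHom (0 : ℤ)).mapMatrix this
  rwa [map_mul, h, mul_one, map_one] at this

open Polynomial Matrix in
lemma LeadTerm.comm {g h : SpecialLinearGroup (Fin 2) ℤ[X]} {k l : ℕ} {U V}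
    (hg : LeadTerm g k U) (hh : LeadTerm h l V) (hk : 1 ≤ k) (hl : 1 ≤ l) :
    LeadTerm ⁅g, h⁆ (k + l) (U * V - V * U) := by
  have e1 := LeadTerm.inv_ev (hg.ev hk)
  have e2 := LeadTerm.inv_ev (hh.ev hl)
  obtain ⟨U', h1, rfl⟩ := hg
  obtain ⟨V', h2, rfl⟩ := hh
  refine ⟨(U' * V' - V' * U') * ((g⁻¹).1 * (h⁻¹).1), ?_, ?_⟩
  · have e3 : g.1 * h.1 - h.1 * g.1 = (X : ℤ[X]) ^ (k + l) • (U' * V' - V' * U') := by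
      rw [h1, h2]
      simp only [add_mul, mul_add, one_mul, mul_one, smul_mul_assoc, mul_smul_comm, smul_sub,
        smul_add, pow_add, mul_smul]
      rw [smul_comm ((X : ℤ[X]) ^ l) (X ^ k)]
      abel
    have e4 : (h * g) * (g⁻¹ * h⁻¹) = 1 := by group
    have e5 : h.1 * g.1 * ((g⁻¹).1 * (h⁻¹).1) = 1 := congrArg Subtype.val e4
    rw [← smul_mul_assoc, ← e3, sub_mul, e5, commutatorElement_def, mul_assoc (g * h)]
    change g.1 * h.1 * ((g⁻¹).1 * (h⁻¹).1) = _
    abel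
  · rw [map_mul, map_mul, e1, e2, map_sub, map_mul, map_mul, mul_one, mul_one]

open Polynomial Matrix in
lemma LeadTerm.one (k : ℕ) : LeadTerm 1 k 0 := ⟨0, by simp, by simp⟩

open Polynomial Matrix in
lemma LeadTerm.eq_zero {k : ℕ} {U} (h : LeadTerm 1 k U) : U = 0 := by
  obtain ⟨V, h, rfl⟩ := h
  have : V = 0 := by
    have h' : (X : ℤ[X]) ^ k • V = 0 := by simpa using h
    exact (smul_eq_zero.1 h').resolve_left (pow_ne_zero _ X_ne_zero)
  rw [this, map_zero]

open Polynomial Matrix in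
lemma LeadTerm.succ {g : SpecialLinearGroup (Fin 2) ℤ[X]} {k : ℕ}
    (h : LeadTerm g k 0) : ∃ U, LeadTerm g (k + 1) U := by
  obtain ⟨V, h, h0⟩ := h
  have : ∀ i j, ∃ p, V i j = X * p := by
    intro i j
    have := congrFun (congrFun h0 i) j
    simp [Matrix.map_apply] at this
    apply X_dvd_iff.2
    rwa [coeff_zero_eq_eval_zero]
  choose p hp using this
  refine ⟨_, Matrix.of p, ?_, rfl⟩
  rw [h]
  congr 1
  ext1 i j
  simp [hp, pow_succ, mul_assoc]

open Polynomial Matrix in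
lemma LeadTerm.trace {g : SpecialLinearGroup (Fin 2) ℤ[X]} {k : ℕ} {U} (hk : 1 ≤ k)
    (h : LeadTerm g k U) : U 1 1 = - U 0 0 := by
  obtain ⟨V, h, rfl⟩ := h
  have hd := g.2
  rw [h, Matrix.det_fin_two] at hd
  simp at hd
  have h2 : (X : ℤ[X]) ^ k * (V 0 0 + V 1 1 + X ^ k * (V 0 0 * V 1 1 - V 0 1 * V 1 0)) = 0 := by
    linear_combination hd
  have h3 := (mul_eq_zero.1 h2).resolve_left (pow_ne_zero _ X_ne_zero)
  have h4 := congrArg (eval 0) h3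
  have : k ≠ 0 := by omega
  simp [this] at h4
  simp [Matrix.map_apply]
  linarith

open Polynomial Matrix in
lemma LeadTerm.eq_one {g : SpecialLinearGroup (Fin 2) ℤ[X]}
    (h : ∀ k, 1 ≤ k → ∃ U, LeadTerm g k U) : g = 1 := by
  apply Subtype.ext
  change g.1 = 1
  rw [← sub_eq_zero]
  ext1 i j
  rw [Matrix.zero_apply]
  obtain ⟨U, V, hV, -⟩ := h (((g.1 - 1) i j).natDegree + 1) (by omega)
  have hd : (X : ℤ[X]) ^ (((g.1 - 1) i j).natDegree + 1) ∣ (g.1 - 1) i j := by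
    refine ⟨V i j, ?_⟩
    conv_lhs => rw [hV]
    simp
  by_contra hne
  have := natDegree_le_of_dvd hd hne
  simp at this

/-- The group word playing the role of a square. -/
def sqWord {G : Type*} [Group G] (a b u : G) : G :=
  ⁅⁅⁅a, u⁆, ⁅a, ⁅a, u⁆⁆⁆, b⁆ * ⁅a, ⁅⁅b, u⁆, ⁅b, ⁅b, u⁆⁆⁆⁆ * ⁅a, ⁅b, ⁅⁅b, u⁆, ⁅a, u⁆⁆⁆⁆

lemma map_sqWord {G H : Type*} [Group G] [Group H] (f : G →* H) (a b u : G) :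
    f (sqWord a b u) = sqWord (f a) (f b) (f u) := by
  simp [sqWord, map_commutatorElement]

lemma map_sqWord_prod {G H : Type*} [Group G] [Group H] (f : G →* H) (a b : G) (L : List G) :
    f (L.map (sqWord a b)).prod = ((L.map f).map (sqWord (f a) (f b))).prod := by
  induction L with
  | nil => simp
  | cons u L ih =>
    simp only [List.map_cons, List.prod_cons, map_mul, ih, map_sqWord]

lemma sqWord_one {G : Type*} [Group G] (a b : G) : sqWord a b 1 = 1 := by
  simp [sqWord]

open Polynomial Matrix in
lemma sqWord_lead {a b u : SpecialLinearGroup (Fin 2) ℤ[X]} {k : ℕ} {U} (hk : 1 ≤ k)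
    (ha : LeadTerm a 1 !![0, -1; 0, 0]) (hb : LeadTerm b 1 !![0, 0; 1, 0])
    (hu : LeadTerm u k U) :
    ∃ Q, LeadTerm (sqWord a b u) (2 * k + 4) Q ∧
      Q 0 0 = 4 * (U 0 1) ^ 2 + 4 * (U 1 0) ^ 2 + 8 * (U 0 0) ^ 2 := by
  have htr := hu.trace hk
  have au := ha.comm hu le_rfl hk
  have bu := hb.comm hu le_rfl hk
  have aau := ha.comm au le_rfl (by omega)
  have bbu := hb.comm bu le_rfl (by omega)
  have t1 := (au.comm aau (by omega) (by omega)).comm hb (by omega) le_rfl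
  have t2 := ha.comm (bu.comm bbu (by omega) (by omega)) le_rfl (by omega)
  have t3 := ha.comm (hb.comm (bu.comm au (by omega) (by omega)) le_rfl (by omega)) le_rfl
    (by omega)
  have i1 : 1 + k + (1 + (1 + k)) + 1 = 2 * k + 4 := by ring
  have i2 : 1 + (1 + k + (1 + (1 + k))) = 2 * k + 4 := by ring
  have i3 : 1 + (1 + (1 + k + (1 + k))) = 2 * k + 4 := by ring
  rw [i1] at t1
  rw [i2] at t2
  rw [i3] at t3
  refine ⟨_, (t1.mul t2 (by omega)).mul t3 (by omega), ?_⟩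
  have hU : U = !![U 0 0, U 0 1; U 1 0, - U 0 0] := by
    rw [← htr]; exact Matrix.eta_fin_two U
  generalize U 0 0 = x at *
  generalize U 0 1 = y at *
  generalize U 1 0 = z at *
  subst hU
  have hsub : ∀ p q s t p' q' s' t' : ℤ, !![p, q; s, t] - !![p', q'; s', t'] =
      !![p - p', q - q'; s - s', t - t'] := by
    intros
    ext i j
    fin_cases i <;> fin_cases j <;> simp
  simp only [Matrix.mul_fin_two, hsub, Matrix.add_apply]
  simp
  ring

open Polynomial Matrix in
lemma sqWord_prod {a b : SpecialLinearGroup (Fin 2) ℤ[X]}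
    (ha : LeadTerm a 1 !![0, -1; 0, 0]) (hb : LeadTerm b 1 !![0, 0; 1, 0])
    {k : ℕ} (hk : 1 ≤ k) (L : List (SpecialLinearGroup (Fin 2) ℤ[X]))
    (hL : ∀ u ∈ L, ∃ U, LeadTerm u k U) :
    ∃ Q, LeadTerm (L.map (sqWord a b)).prod (2 * k + 4) Q ∧ 0 ≤ Q 0 0 ∧
      (Q 0 0 = 0 → ∀ u ∈ L, LeadTerm u k 0) := by
  induction L with
  | nil => exact ⟨0, by simpa using LeadTerm.one _, by simp, by simp⟩
  | cons u L ih =>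
    obtain ⟨Q, h1, h2, h3⟩ := ih fun u hu => hL u (by simp [hu])
    obtain ⟨U, hU⟩ := hL u (by simp)
    obtain ⟨Q', h1', h2'⟩ := sqWord_lead hk ha hb hU
    refine ⟨Q' + Q, ?_, ?_, ?_⟩
    · simpa using h1'.mul h1 (by omega)
    · rw [Matrix.add_apply, h2']; positivity
    · intro h
      rw [Matrix.add_apply, h2'] at h
      have e0 : Q 0 0 = 0 := by nlinarith [sq_nonneg (U 0 1), sq_nonneg (U 1 0), sq_nonneg (U 0 0)]
      have e1 : U 0 1 = 0 := by
        apply pow_eq_zero_iff (two_ne_zero) |>.1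
        nlinarith [sq_nonneg (U 0 1), sq_nonneg (U 1 0), sq_nonneg (U 0 0)]
      have e2 : U 1 0 = 0 := by
        apply pow_eq_zero_iff (two_ne_zero) |>.1
        nlinarith [sq_nonneg (U 0 1), sq_nonneg (U 1 0), sq_nonneg (U 0 0)]
      have e3 : U 0 0 = 0 := by
        apply pow_eq_zero_iff (two_ne_zero) |>.1
        nlinarith [sq_nonneg (U 0 1), sq_nonneg (U 1 0), sq_nonneg (U 0 0)]
      have e4 := hU.trace hk
      have : U = 0 := by
        ext i j
        fin_cases i <;> fin_cases j <;> simp [e1, e2, e3, e4]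
      subst this
      intro v hv
      rcases List.mem_cons.1 hv with rfl | hv
      · exact hU
      · exact h3 e0 v hv

open Polynomial Matrix in
lemma sqWord_prod_eq_one {a b : SpecialLinearGroup (Fin 2) ℤ[X]}
    (ha : LeadTerm a 1 !![0, -1; 0, 0]) (hb : LeadTerm b 1 !![0, 0; 1, 0])
    (L : List (SpecialLinearGroup (Fin 2) ℤ[X]))
    (hL : ∀ u ∈ L, ∃ U, LeadTerm u 1 U) (h : (L.map (sqWord a b)).prod = 1) :
    ∀ u ∈ L, u = 1 := by
  have key : ∀ k, 1 ≤ k → ∀ u ∈ L, ∃ U, LeadTerm u k U := by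
    intro k hk
    induction k, hk using Nat.le_induction with
    | base => exact hL
    | succ k hk ih =>
      obtain ⟨Q, h1, -, h3⟩ := sqWord_prod ha hb hk L ih
      rw [h] at h1
      intro u hu
      exact (h3 (by simp [h1.eq_zero]) u hu).succ
  exact fun u hu => LeadTerm.eq_one fun k hk => key k hk u hu

open Polynomial Matrix in
/-- `1 + n X N_i` -/
noncomputable def genMat (i n : ℤ) : SpecialLinearGroup (Fin 2) ℤ[X] :=
  ⟨1 + (X : ℤ[X]) • !![C (n * ((1 - i) * i)), C (n * (-(1 - i) ^ 2)); C (n * i ^ 2),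
      C (n * (-((1 - i) * i)))], by
    rw [Matrix.det_fin_two]; simp; ring⟩

open Polynomial Matrix in
/-- The one parameter subgroup. -/
noncomputable def genHom (i : ℤ) : Multiplicative ℤ →* SpecialLinearGroup (Fin 2) ℤ[X] where
  toFun n := genMat i n.toAdd
  map_one' := by
    apply Subtype.ext
    ext1 a b
    fin_cases a <;> fin_cases b <;> simp [genMat]
  map_mul' m n := by
    apply Subtype.ext
    change (genMat i (m.toAdd + n.toAdd)).1 = (genMat i m.toAdd).1 * (genMat i n.toAdd).1
    ext1 a b
    rw [Matrix.mul_apply, Fin.sum_univ_two]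
    fin_cases a <;> fin_cases b <;> simp [genMat] <;> ring

open Polynomial Matrix in
lemma genMat_zpow (i n : ℤ) : genMat i 1 ^ n = genMat i n := by
  have := map_zpow (genHom i) (Multiplicative.ofAdd 1) n
  rw [← ofAdd_zsmul] at this
  have h2 : genMat i (n • (1 : ℤ)) = genMat i 1 ^ n := this
  rw [← h2]
  simp

open Polynomial Matrix in
/-- The ping-pong set. -/
def ppSet (i : ℤ) : Set (Fin 2 → ℤ[X]) :=
  {v | ∃ (d : ℕ) (c : ℤ), c ≠ 0 ∧ (v 0).natDegree ≤ d ∧ (v 1).natDegree ≤ d ∧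
    (v 0).coeff d = c * (1 - i) ∧ (v 1).coeff d = c * i}

open Polynomial Matrix in
lemma ppSet_aux {j : ℤ} {v : Fin 2 → ℤ[X]} {d d' : ℕ} {c' : ℤ} (hc' : c' ≠ 0)
    (h0 : (v 0).natDegree ≤ d) (h1 : (v 1).natDegree ≤ d) 
    (h2' : (v 0).coeff d' = c' * (1 - j)) (h3' : (v 1).coeff d' = c' * j) : d' ≤ d := by
  by_contra hlt
  push Not at hlt
  rw [coeff_eq_zero_of_natDegree_lt (by omega)] at h2' h3'
  apply hc'
  linarith

open Polynomial Matrix in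
lemma ppSet_disj {i j : ℤ} (hij : i ≠ j) : Disjoint (ppSet i) (ppSet j) := by
  rw [Set.disjoint_left]
  rintro v ⟨d, c, hc, h0, h1, h2, h3⟩ ⟨d', c', hc', h0', h1', h2', h3'⟩
  have e1 : d' ≤ d := ppSet_aux hc' h0 h1 h2' h3'
  have e2 : d ≤ d' := ppSet_aux hc h0' h1' h2 h3
  obtain rfl : d = d' := le_antisymm e2 e1
  have : c = c' := by linarith
  subst this
  exact hij (mul_left_cancel₀ hc (h3.symm.trans h3'))

open Polynomial Matrix in
lemma ppSet_nonempty (i : ℤ) : (ppSet i).Nonempty :=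
  ⟨![C (1 - i), C i], 0, 1, one_ne_zero, (natDegree_C _).le, (natDegree_C _).le,
    (by simp only [Matrix.cons_val_zero, coeff_C_zero]; ring), (by simp)⟩

open Polynomial Matrix in
lemma ppSet_map {i j n : ℤ} (hij : i ≠ j) (hn : n ≠ 0) {v : Fin 2 → ℤ[X]} (hv : v ∈ ppSet j) :
    genMat i n • v ∈ ppSet i := by
  obtain ⟨d, c, hc, h0, h1, h2, h3⟩ := hv
  have hw : ((C i * v 0 - C (1 - i) * v 1 : ℤ[X])).natDegree ≤ d := by
    refine (natDegree_sub_le _ _).trans (max_le ?_ ?_)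
    · exact (natDegree_C_mul_le _ _).trans h0
    · exact (natDegree_C_mul_le _ _).trans h1
  have hwc : ((C i * v 0 - C (1 - i) * v 1 : ℤ[X])).coeff d = c * (i - j) := by
    rw [coeff_sub, coeff_C_mul, coeff_C_mul, h2, h3]; ring
  generalize hW : (C i * v 0 - C (1 - i) * v 1 : ℤ[X]) = W at *
  have g0 : (genMat i n • v) 0 = v 0 + C (n * (1 - i)) * (W * X) := by
    rw [Matrix.SpecialLinearGroup.smul_def, ← hW]
    simp [genMat, Matrix.mulVec, dotProduct, Fin.sum_univ_two]
    ring
  have g1 : (genMat i n • v) 1 = v 1 + C (n * i) * (W * X) := by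
    rw [Matrix.SpecialLinearGroup.smul_def, ← hW]
    simp [genMat, Matrix.mulVec, dotProduct, Fin.sum_univ_two]
    ring
  have hWX : (W * X).natDegree ≤ d + 1 := natDegree_mul_le.trans (by simp; omega)
  refine ⟨d + 1, n * (c * (i - j)), mul_ne_zero hn (mul_ne_zero hc (sub_ne_zero.2 hij)),
    ?_, ?_, ?_, ?_⟩
  · rw [g0]
    exact (natDegree_add_le _ _).trans (max_le (by omega) ((natDegree_C_mul_le _ _).trans hWX))
  · rw [g1]
    exact (natDegree_add_le _ _).trans (max_le (by omega) ((natDegree_C_mul_le _ _).trans hWX))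
  · rw [g0, coeff_add, coeff_C_mul, coeff_mul_X, hwc,
      coeff_eq_zero_of_natDegree_lt (by omega)]
    ring
  · rw [g1, coeff_add, coeff_C_mul, coeff_mul_X, hwc,
      coeff_eq_zero_of_natDegree_lt (by omega)]
    ring

open Polynomial Matrix in
/-- The faithful representation. -/
noncomputable def rho (r : ℕ) : FreeGroup (Fin r) →* SpecialLinearGroup (Fin 2) ℤ[X] :=
  FreeGroup.lift fun i => genMat (i : ℕ) 1

open Polynomial Matrix Monoid Pointwise in
lemma rho_injective {r : ℕ} (hr : 2 ≤ r) : Function.Injective (rho r) := by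
  have : rho r =
      (CoprodI.lift fun i : Fin r => FreeGroup.lift fun _ : Unit => genMat (i : ℕ) 1).comp
        (@freeGroupEquivCoprodI (Fin r)).toMonoidHom := by
    ext1 i
    simp [rho]
  rw [this, MonoidHom.coe_comp]
  clear this
  refine Function.Injective.comp ?_ (MulEquiv.injective freeGroupEquivCoprodI)
  have : Nontrivial (Fin r) := Fin.nontrivial_iff_two_le.2 hr
  refine CoprodI.lift_injective_of_ping_pong (H := fun _ : Fin r => FreeGroup Unit)
    (fun i : Fin r => FreeGroup.lift fun _ : Unit => genMat (i : ℕ) 1) ?_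
    (fun i : Fin r => ppSet (i : ℕ)) ?_ ?_ ?_
  · right
    refine ⟨⟨0, by omega⟩, ?_⟩
    have : Infinite (FreeGroup Unit) := FreeGroup.freeGroupUnitEquivInt.symm.infinite_iff.1 inferInstance
    exact (Cardinal.natCast_le_aleph0 (n := 3)).trans (Cardinal.aleph0_le_mk _)
  · exact fun i => ppSet_nonempty _
  · intro i j hij
    apply ppSet_disj
    exact_mod_cast fun h => hij (Fin.ext h)
  · rintro i j hij
    refine FreeGroup.freeGroupUnitEquivInt.forall_congr_left.mpr ?_
    intro n hne1
    change FreeGroup.lift (fun _ => genMat (i : ℕ) 1) (FreeGroup.of () ^ n) •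
      ppSet (j : ℕ) ⊆ ppSet (i : ℕ)
    have hn : n ≠ 0 := by
      rintro rfl
      exact hne1 rfl
    rw [map_zpow, FreeGroup.lift_apply_of, genMat_zpow]
    rintro _ ⟨v, hv, rfl⟩
    refine ppSet_map ?_ hn hv
    exact_mod_cast fun h => hij (Fin.ext h)

open Polynomial Matrix in
lemma genMat_lead (i n : ℤ) : LeadTerm (genMat i n) 1 
    !![n * ((1 - i) * i), (n * (-(1 - i) ^ 2)); (n * i ^ 2), (n * (-((1 - i) * i)))] := by
  refine ⟨_, by rw [pow_one]; rfl, ?_⟩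
  ext a b
  fin_cases a <;> fin_cases b <;> simp [Matrix.map_apply]

open Polynomial Matrix in
lemma rho_lead {r : ℕ} (g : FreeGroup (Fin r)) : ∃ U, LeadTerm (rho r g) 1 U := by
  induction g using FreeGroup.induction_on with
  | C1 => exact ⟨0, by simpa using LeadTerm.one 1⟩
  | of i => exact ⟨_, by simpa [rho] using genMat_lead (i : ℕ) 1⟩
  | inv_of i _ =>
    have : rho r (FreeGroup.of i)⁻¹ = genMat (i : ℕ) (-1) := by
      rw [map_inv, rho, FreeGroup.lift_apply_of, ← _root_.zpow_neg_one, genMat_zpow]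
    rw [this]
    exact ⟨_, genMat_lead _ _⟩
  | mul x y hx hy =>
    obtain ⟨U, hU⟩ := hx
    obtain ⟨V, hV⟩ := hy
    exact ⟨U + V, by rw [map_mul]; exact hU.mul hV le_rfl⟩

/-- Over a free group of finite rank at least 2, every finite system of equations with
constants in variables `x₁, …, xₙ` is equivalent to a single equation with constants. -/
theorem finite_system_equivalent_to_single_equation (r n s : ℕ) (hr : 2 ≤ r)
    (w : Fin s → FreeGroup (Fin n ⊕ Fin r)) :
    ∃ w₀ : FreeGroup (Fin n ⊕ Fin r),
      ∀ a : Fin n → FreeGroup (Fin r),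
        (evalEquation a w₀ = 1 ↔ ∀ i, evalEquation a (w i) = 1) := by
  have h0 : 0 < r := by omega
  have h1 : 1 < r := by omega
  let a' : FreeGroup (Fin n ⊕ Fin r) := FreeGroup.of (Sum.inr ⟨0, h0⟩)
  let b' : FreeGroup (Fin n ⊕ Fin r) := FreeGroup.of (Sum.inr ⟨1, h1⟩)
  refine ⟨((List.ofFn w).map (sqWord a' b')).prod, fun a => ?_⟩
  have ea : evalEquation a a' = FreeGroup.of ⟨0, h0⟩ := by simp [evalEquation, a']
  have eb : evalEquation a b' = FreeGroup.of ⟨1, h1⟩ := by simp [evalEquation, b']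
  have ra : LeadTerm (rho r (evalEquation a a')) 1 !![0, -1; 0, 0] := by
    rw [ea, rho, FreeGroup.lift_apply_of]
    simpa using genMat_lead 0 1
  have rb : LeadTerm (rho r (evalEquation a b')) 1 !![0, 0; 1, 0] := by
    rw [eb, rho, FreeGroup.lift_apply_of]
    simpa using genMat_lead 1 1
  constructor
  · intro h i
    apply rho_injective hr
    rw [map_one]
    refine sqWord_prod_eq_one ra rb
      ((List.ofFn w).map fun u => rho r (evalEquation a u)) ?_ ?_ _ ?_
    · intro u hu
      obtain ⟨v, -, rfl⟩ := List.mem_map.1 hu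
      exact rho_lead _
    · have h2 := congrArg (rho r) h
      rw [map_one, map_sqWord_prod, map_sqWord_prod, List.map_map (f := evalEquation a) (g := rho r)] at h2
      exact h2
    · exact List.mem_map.2 ⟨w i, by simp, rfl⟩
  · intro h
    rw [map_list_prod, List.map_map]
    apply List.prod_eq_one
    intro x hx
    obtain ⟨u, hu, rfl⟩ := List.mem_map.1 hx
    obtain ⟨i, rfl⟩ := (List.mem_ofFn' _ _).1 hu
    simp [map_sqWord, h i, sqWord_one]
end

section
/- Let F be a free group of finite rank at least 2 and let G be a finitely generated group. For any family Ψ of group homomorphisms from G to F there exist finitely many normal subgroups N₁,…,N_k of G such that each quotient G/Nᵢ is a finitely generated fully residually free group and every homomorphism ψ ∈ Ψ factors through one of the quotients G/Nᵢ, i.e., for every ψ ∈ Ψ there is an index i with Nᵢ contained in the kernel of ψ. -/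
/-- A group `H` is fully residually free if for every finite set of nontrivial elements
of `H` there is a homomorphism from `H` to a free group mapping each of them to a
nontrivial element. -/
def FullyResiduallyFree (H : Type*) [Group H] : Prop :=
  ∀ s : Finset H, (∀ h ∈ s, h ≠ 1) →
    ∃ (ι : Type) (f : H →* FreeGroup ι), ∀ h ∈ s, f h ≠ 1

open Matrix in
theorem pp_ne {g : SpecialLinearGroup (Fin 2) ℤ} {v : Fin 2 → ℤ} (hv : v ≠ 0) :
    g.1 *ᵥ v ≠ 0 := by
  intro h
  apply hv
  have h1 : (g⁻¹).1 *ᵥ (g.1 *ᵥ v) = v := by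
    rw [mulVec_mulVec]
    have : (g⁻¹).1 * g.1 = 1 := by
      have := congrArg Subtype.val (inv_mul_cancel g)
      exact this
    rw [this, one_mulVec]
  rw [← h1, h, mulVec_zero]

/-- nonzero integer vectors -/
def PPVec : Type := {v : Fin 2 → ℤ // v ≠ 0}

open Matrix in
instance ppAction : MulAction (SpecialLinearGroup (Fin 2) ℤ) PPVec where
  smul g v := ⟨g.1 *ᵥ v.1, pp_ne v.2⟩
  one_smul v := Subtype.ext (one_mulVec v.1)
  mul_smul g h v := Subtype.ext (by
    change (g * h).1 *ᵥ v.1 = g.1 *ᵥ (h.1 *ᵥ v.1)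
    rw [mulVec_mulVec]; rfl)

open Matrix in
theorem pp_smul (g : SpecialLinearGroup (Fin 2) ℤ) (v : PPVec) :
    (g • v).1 = g.1 *ᵥ v.1 := rfl

/-- parabolic matrix fixing `c` -/
def ppMat (c : ℤ) : Matrix.SpecialLinearGroup (Fin 2) ℤ :=
  ⟨!![1 + 8 * c, -(8 * c ^ 2); 8, 1 - 8 * c], by rw [Matrix.det_fin_two_of]; ring⟩

/-- attracting set -/
def ppX (c : ℤ) : Set PPVec :=
  {v | 4 * (v.1 0 - c * v.1 1) ^ 2 ≤ v.1 1 * (v.1 0 - c * v.1 1)}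

/-- repelling set -/
def ppY (c : ℤ) : Set PPVec :=
  {v | v.1 1 * (v.1 0 - c * v.1 1) < -(4 * (v.1 0 - c * v.1 1) ^ 2)}

theorem pp_bound {y p : ℤ} (h : 4 * p ^ 2 ≤ |y * p|) : 4 * |p| ≤ |y| := by
  rw [abs_mul, ← sq_abs] at h
  rcases eq_or_ne p 0 with rfl | hp
  · simp
  · have : 0 < |p| := abs_pos.mpr hp
    nlinarith

theorem pp_disj {c d : ℤ} (hcd : c ≠ d) (v : PPVec)
    (h1 : 4 * |v.1 0 - c * v.1 1| ≤ |v.1 1|) (h2 : 4 * |v.1 0 - d * v.1 1| ≤ |v.1 1|) : False := by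
  have h3 : |(d - c) * v.1 1| ≤ |v.1 0 - c * v.1 1| + |v.1 0 - d * v.1 1| := by
    have := abs_sub (v.1 0 - c * v.1 1) (v.1 0 - d * v.1 1)
    have h0 : (d - c) * v.1 1 = (v.1 0 - c * v.1 1) - (v.1 0 - d * v.1 1) := by ring
    rw [h0]
    exact this
  have h4 : 1 ≤ |d - c| := Int.one_le_abs (sub_ne_zero.mpr hcd.symm)
  rw [abs_mul] at h3
  have h5 : |v.1 1| ≤ |d - c| * |v.1 1| := le_mul_of_one_le_left (abs_nonneg _) h4
  have h6 : |v.1 1| = 0 := by have := abs_nonneg (v.1 1); omega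
  have h7 : v.1 1 = 0 := abs_eq_zero.mp h6
  rw [h7] at h1
  have h8 : v.1 0 = 0 := by
    rw [mul_zero, sub_zero, abs_zero] at h1
    have := abs_nonneg (v.1 0)
    exact abs_eq_zero.mp (by omega)
  apply v.2
  ext i
  fin_cases i
  · simpa using h8
  · simpa using h7

theorem ppX_bound {c : ℤ} {v : PPVec} (h : v ∈ ppX c) : 4 * |v.1 0 - c * v.1 1| ≤ |v.1 1| :=
  pp_bound (le_trans h (le_abs_self _))

theorem ppY_bound {c : ℤ} {v : PPVec} (h : v ∈ ppY c) : 4 * |v.1 0 - c * v.1 1| ≤ |v.1 1| := by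
  apply pp_bound
  have h' : v.1 1 * (v.1 0 - c * v.1 1) < -(4 * (v.1 0 - c * v.1 1) ^ 2) := h
  have := neg_abs_le (v.1 1 * (v.1 0 - c * v.1 1))
  linarith

theorem ppMat_smul_zero (c : ℤ) (v : PPVec) :
    (ppMat c • v).1 0 = (1 + 8 * c) * v.1 0 + -(8 * c ^ 2) * v.1 1 := by
  rw [pp_smul, Matrix.mulVec, dotProduct, Fin.sum_univ_two]; rfl

theorem ppMat_smul_one (c : ℤ) (v : PPVec) :
    (ppMat c • v).1 1 = 8 * v.1 0 + (1 - 8 * c) * v.1 1 := by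
  rw [pp_smul, Matrix.mulVec, dotProduct, Fin.sum_univ_two]; rfl

theorem ppMat_inv_smul_zero (c : ℤ) (v : PPVec) :
    ((ppMat c)⁻¹ • v).1 0 = (1 - 8 * c) * v.1 0 + -(-(8 * c ^ 2)) * v.1 1 := by
  rw [pp_smul, Matrix.mulVec, dotProduct, Fin.sum_univ_two, Matrix.SpecialLinearGroup.SL2_inv_expl]
  rfl

theorem ppMat_inv_smul_one (c : ℤ) (v : PPVec) :
    ((ppMat c)⁻¹ • v).1 1 = -8 * v.1 0 + (1 + 8 * c) * v.1 1 := by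
  rw [pp_smul, Matrix.mulVec, dotProduct, Fin.sum_univ_two, Matrix.SpecialLinearGroup.SL2_inv_expl]
  rfl

theorem pp_injective (r : ℕ) (hr : 2 ≤ r) :
    Function.Injective (FreeGroup.lift (fun i : Fin r => ppMat ((i : ℕ) : ℤ))) := by
  have : Nontrivial (Fin r) := Fin.nontrivial_iff_two_le.mpr hr
  have hne : ∀ {i j : Fin r}, i ≠ j → ((i : ℕ) : ℤ) ≠ ((j : ℕ) : ℤ) := by
    intro i j h h'
    exact h (Fin.ext (by exact_mod_cast h'))
  apply FreeGroup.injective_lift_of_ping_pong (α := PPVec) _ (fun i : Fin r => ppX ((i : ℕ) : ℤ))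
    (fun i : Fin r => ppY ((i : ℕ) : ℤ))
  · intro i
    refine ⟨⟨![((i : ℕ) : ℤ), 1], fun h => by simpa using congrFun h 1⟩, ?_⟩
    change 4 * (((i : ℕ) : ℤ) - ((i : ℕ) : ℤ) * 1) ^ 2 ≤ 1 * (((i : ℕ) : ℤ) - ((i : ℕ) : ℤ) * 1)
    simp
  · intro i j hij
    exact Set.disjoint_left.mpr fun v h1 h2 => pp_disj (hne hij) v (ppX_bound h1) (ppX_bound h2)
  · intro i j hij
    exact Set.disjoint_left.mpr fun v h1 h2 => pp_disj (hne hij) v (ppY_bound h1) (ppY_bound h2)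
  · intro i j
    refine Set.disjoint_left.mpr fun v h1 h2 => ?_
    by_cases hij : i = j
    · subst hij
      simp only [ppX, ppY, Set.mem_ofPred_eq] at h1 h2
      nlinarith [sq_nonneg (v.1 0 - ((i : ℕ) : ℤ) * v.1 1)]
    · exact pp_disj (hne hij) v (ppX_bound h1) (ppY_bound h2)
  · rintro i _ ⟨v, hv, rfl⟩
    have hv' := hv
    simp only [ppY, Set.mem_ofPred_eq, Set.mem_compl_iff, not_lt] at hv'
    change 4 * ((ppMat ((i : ℕ) : ℤ) • v).1 0 - ((i : ℕ) : ℤ) * (ppMat ((i : ℕ) : ℤ) • v).1 1) ^ 2 ≤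
      (ppMat ((i : ℕ) : ℤ) • v).1 1 *
        ((ppMat ((i : ℕ) : ℤ) • v).1 0 - ((i : ℕ) : ℤ) * (ppMat ((i : ℕ) : ℤ) • v).1 1)
    rw [ppMat_smul_zero, ppMat_smul_one]
    linear_combination hv'
  · rintro i _ ⟨v, hv, rfl⟩
    have hv' := hv
    simp only [ppX, Set.mem_ofPred_eq, Set.mem_compl_iff, not_le] at hv'
    change ((ppMat ((i : ℕ) : ℤ))⁻¹ • v).1 1 * (((ppMat ((i : ℕ) : ℤ))⁻¹ • v).1 0 -
        ((i : ℕ) : ℤ) * ((ppMat ((i : ℕ) : ℤ))⁻¹ • v).1 1) <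
      -(4 * (((ppMat ((i : ℕ) : ℤ))⁻¹ • v).1 0 -
        ((i : ℕ) : ℤ) * ((ppMat ((i : ℕ) : ℤ))⁻¹ • v).1 1) ^ 2)
    rw [ppMat_inv_smul_zero, ppMat_inv_smul_one]
    linear_combination hv'

section
variable {G : Type*} [Group G] {I : Type*}
  (φ : I → G →* Matrix.SpecialLinearGroup (Fin 2) ℤ)

/-- matrix coefficient as a function on the family -/
def ppCoef (g : G) (a b : Fin 2) : I → ℤ := fun ψ => (φ ψ g).1 a b

theorem ppCoef_mem (S : Set G) (hS : Subgroup.closure S = ⊤) (g : G) :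
    ∀ a b, ppCoef φ g a b ∈
      Algebra.adjoin ℤ ((fun t : G × Fin 2 × Fin 2 => ppCoef φ t.1 t.2.1 t.2.2) ''
        (S ×ˢ Set.univ)) := by
  have hg : g ∈ Subgroup.closure S := hS ▸ Subgroup.mem_top g
  induction hg using Subgroup.closure_induction with
  | mem x hx =>
    intro a b
    exact Algebra.subset_adjoin ⟨(x, a, b), ⟨hx, trivial⟩, rfl⟩
  | one =>
    intro a b
    have : ppCoef φ (1 : G) a b = algebraMap ℤ (I → ℤ) ((1 : Matrix (Fin 2) (Fin 2) ℤ) a b) := by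
      funext ψ
      simp [ppCoef]
    rw [this]
    exact Subalgebra.algebraMap_mem _ _
  | mul x y _ _ hx hy =>
    intro a b
    have : ppCoef φ (x * y) a b = ppCoef φ x a 0 * ppCoef φ y 0 b +
        ppCoef φ x a 1 * ppCoef φ y 1 b := by
      funext ψ
      simp [ppCoef, Matrix.mul_apply, Fin.sum_univ_two]
    rw [this]
    exact add_mem (mul_mem (hx _ _) (hy _ _)) (mul_mem (hx _ _) (hy _ _))
  | inv x _ hx =>
    intro a b
    have key : ∀ ψ, (φ ψ x⁻¹).1 = !![(φ ψ x).1 1 1, -(φ ψ x).1 0 1;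
        -(φ ψ x).1 1 0, (φ ψ x).1 0 0] := by
      intro ψ
      rw [map_inv, Matrix.SpecialLinearGroup.SL2_inv_expl]
      rfl
    fin_cases a <;> fin_cases b
    · have : ppCoef φ x⁻¹ 0 0 = ppCoef φ x 1 1 := by funext ψ; simp only [ppCoef, key]; simp
      exact this ▸ hx _ _
    · have : ppCoef φ x⁻¹ 0 1 = -ppCoef φ x 0 1 := by
        funext ψ; simp only [ppCoef, key, Pi.neg_apply]; simp
      exact this ▸ neg_mem (hx _ _)
    · have : ppCoef φ x⁻¹ 1 0 = -ppCoef φ x 1 0 := by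
        funext ψ; simp only [ppCoef, key, Pi.neg_apply]; simp
      exact this ▸ neg_mem (hx _ _)
    · have : ppCoef φ x⁻¹ 1 1 = ppCoef φ x 0 0 := by funext ψ; simp only [ppCoef, key]; simp
      exact this ▸ hx _ _

theorem pp_topology [Group.FG G] : ∃ _ : TopologicalSpace I,
    TopologicalSpace.NoetherianSpace I ∧ ∀ g : G, IsClosed {ψ : I | φ ψ g = 1} := by
  obtain ⟨S, hS⟩ := Group.fg_def.mp (inferInstance : Group.FG G)
  have hmem := ppCoef_mem φ (S : Set G) hS
  set A := Algebra.adjoin ℤ ((fun t : G × Fin 2 × Fin 2 => ppCoef φ t.1 t.2.1 t.2.2) ''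
        ((S : Set G) ×ˢ Set.univ)) with hA
  have hN : IsNoetherianRing A := isNoetherianRing_of_fg
    (Subalgebra.fg_def.2 ⟨_, (S.finite_toSet.prod Set.finite_univ).image _, rfl⟩)
  let ev : I → A →+* ℤ := fun ψ => (Pi.evalRingHom (fun _ : I => ℤ) ψ).comp A.subtype
  let pt : I → PrimeSpectrum A := fun ψ => ⟨RingHom.ker (ev ψ), RingHom.ker_isPrime _⟩
  let τ : TopologicalSpace I := TopologicalSpace.induced pt inferInstance
  have hind : Topology.IsInducing pt := ⟨rfl⟩
  refine ⟨τ, hind.noetherianSpace, fun g => ?_⟩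
  let s : Set A := Set.range fun t : Fin 2 × Fin 2 =>
    (⟨ppCoef φ g t.1 t.2, hmem g t.1 t.2⟩ -
      algebraMap ℤ A ((1 : Matrix (Fin 2) (Fin 2) ℤ) t.1 t.2) : A)
  have : {ψ : I | φ ψ g = 1} = pt ⁻¹' PrimeSpectrum.zeroLocus s := by
    ext ψ
    have h1 : ∀ t : Fin 2 × Fin 2, ev ψ (⟨ppCoef φ g t.1 t.2, hmem g t.1 t.2⟩ -
      algebraMap ℤ A ((1 : Matrix (Fin 2) (Fin 2) ℤ) t.1 t.2) : A) =
        (φ ψ g).1 t.1 t.2 - (1 : Matrix (Fin 2) (Fin 2) ℤ) t.1 t.2 := by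
      intro t
      rw [map_sub]
      congr 1
    rw [Set.mem_preimage, PrimeSpectrum.mem_zeroLocus, Set.range_subset_iff]
    change φ ψ g = 1 ↔ ∀ t, _ ∈ RingHom.ker (ev ψ)
    simp only [RingHom.mem_ker, h1, sub_eq_zero]
    constructor
    · intro h t; rw [h]; rfl
    · intro h
      apply Subtype.ext
      ext a b
      exact h (a, b)
  rw [this]
  exact (PrimeSpectrum.isClosed_zeroLocus s).preimage hind.continuous

end

theorem family_of_homs_factors_through_fully_residually_free_quotients
    (r : ℕ) (hr : 2 ≤ r) (G : Type*) [Group G] [Group.FG G]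
    (Ψ : Set (G →* FreeGroup (Fin r))) :
    ∃ (k : ℕ) (N : Fin k → Subgroup G) (hN : ∀ i, (N i).Normal),
      (∀ i, letI := hN i
        Group.FG (G ⧸ N i) ∧ FullyResiduallyFree (G ⧸ N i)) ∧
      ∀ ψ ∈ Ψ, ∃ i, N i ≤ ψ.ker := by
  classical
  let ρ := FreeGroup.lift (fun i : Fin r => ppMat ((i : ℕ) : ℤ))
  obtain ⟨τ, hτ, hcl⟩ := pp_topology (fun ψ : Ψ => ρ.comp ψ.1)
  have hcl' : ∀ g : G, IsClosed {ψ : Ψ | ψ.1 g = 1} := by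
    intro g
    convert hcl g using 3 with ψ
    exact (map_eq_one_iff ρ (pp_injective r hr)).symm
  have hfin := TopologicalSpace.NoetherianSpace.finite_irreducibleComponents (α := Ψ)
  obtain ⟨k, ⟨e⟩⟩ := hfin.exists_equiv_fin
  let N : Fin k → Subgroup G := fun i => ⨅ ψ ∈ (e.symm i).1, ψ.1.ker
  have hmemN : ∀ i g, g ∈ N i ↔ ∀ ψ ∈ (e.symm i).1, ψ.1 g = 1 := by
    intro i g
    simp only [N, Subgroup.mem_iInf, MonoidHom.mem_ker]
  have hN : ∀ i, (N i).Normal := fun i => Subgroup.normal_iInf_normal fun ψ =>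
    Subgroup.normal_iInf_normal fun _ => inferInstance
  refine ⟨k, N, hN, fun i => ?_, fun ψ hψ => ?_⟩
  · have := hN i
    refine ⟨inferInstance, fun s hs => ?_⟩
    have hirr : IsIrreducible (e.symm i).1 := (e.symm i).2.1
    obtain ⟨ψ, hψ, hψs⟩ : ∃ ψ ∈ (e.symm i).1, ∀ h ∈ s, ψ.1 h.out ≠ 1 := by
      by_contra! hcon
      obtain ⟨z, hz, hsub⟩ := isIrreducible_iff_sUnion_isClosed.mp hirr
        (s.image fun h => {ψ : Ψ | ψ.1 h.out = 1})
        (by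
          intro z hz
          obtain ⟨h, -, rfl⟩ := Finset.mem_image.mp hz
          exact hcl' _)
        (by
          intro ψ hψ
          obtain ⟨h, hh, h1⟩ := hcon ψ hψ
          exact ⟨_, Finset.mem_coe.mpr (Finset.mem_image_of_mem _ hh), h1⟩)
      obtain ⟨h, hh, rfl⟩ := Finset.mem_image.mp hz
      apply hs h hh
      rw [← QuotientGroup.out_eq' h, QuotientGroup.eq_one_iff, hmemN]
      exact fun ψ hψ => hsub hψ
    refine ⟨Fin r, QuotientGroup.lift (N i) ψ.1 (fun g hg => (hmemN i g).mp hg ψ hψ), ?_⟩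
    intro h hh
    have := hψs h hh
    rw [← QuotientGroup.out_eq' h]
    exact this
  · let ψ' : Ψ := ⟨ψ, hψ⟩
    refine ⟨e ⟨irreducibleComponent ψ', irreducibleComponent_mem_irreducibleComponents ψ'⟩, ?_⟩
    intro g hg
    exact (hmemN _ g).mp hg ψ' (by simpa using mem_irreducibleComponent)
end
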